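/- The sinc concentration operator commutes with the prolate spheroidal Sturm–Liouville operator. Let c > 0, let K(x,y) = sin(c(x−y))/(π(x−y)) (extended continuously by c/π on the diagonal), and for ψ : [−1,1] → ℝ twice continuously differentiable define (Qψ)(x) = ∫_{−1}^{1} K(x,y) ψ(y) dy and (Lψ)(x) = d/dx[(1−x²) ψ'(x)] − c² x² ψ(x). Then Qψ is smooth and for every x ∈ [−1,1], L(Qψ)(x) = Q(Lψ)(x). Consequently Q and L share eigenfunctions: the prolate spheroidal wave functions solving the Sturm–Liouville equation ((1−x²)ψ')' + (χ − c²x²)ψ = 0 on |x| ≤ 1 are eigenfunctions of the sinc integral operator. -/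

import Mathlib

open MeasureTheory Real

noncomputable section

/-- The sinc concentration kernel `sin(c(x−y))/(π(x−y))`, extended continuously by the
value `c/π` on the diagonal. -/
def sincKernel (c x y : ℝ) : ℝ :=
  if x = y then c / π else Real.sin (c * (x - y)) / (π * (x - y))

/-- The sinc integral (concentration) operator on `[−1,1]`:
`(Qψ)(x) = ∫_{−1}^1 sin(c(x−y))/(π(x−y)) ψ(y) dy`. -/
def Qop (c : ℝ) (ψ : ℝ → ℝ) (x : ℝ) : ℝ :=
  ∫ y in (-1:ℝ)..1, sincKernel c x y * ψ y

/-- The prolate spheroidal Sturm–Liouville operator on `[−1,1]`: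
`(Lψ)(x) = d/dx[(1−x²)ψ'(x)] − c²x²ψ(x)`, with derivatives taken within `[−1,1]`. -/
def Lop (c : ℝ) (ψ : ℝ → ℝ) (x : ℝ) : ℝ :=
  derivWithin (fun t => (1 - t ^ 2) * derivWithin ψ (Set.Icc (-1) 1) t)
    (Set.Icc (-1) 1) x - c ^ 2 * x ^ 2 * ψ x

theorem sinc_contDiff_aux : ContDiff ℝ (⊤ : ℕ∞) Real.sinc := by
  rw [contDiff_iff_contDiffAt]
  intro x
  by_cases hx : x = 0
  · subst hx
    rw [Real.sinc_eq_dslope]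
    have h : AnalyticAt ℝ Real.sin 0 := Real.analyticAt_sin
    obtain ⟨p, hp⟩ := h
    have h2 : AnalyticAt ℝ (dslope Real.sin 0) 0 := ⟨_, hp.has_fpower_series_dslope_fslope⟩
    exact h2.contDiffAt
  · have h : Real.sinc =ᶠ[nhds x] fun t => Real.sin t / t := by
      filter_upwards [isOpen_ne.mem_nhds hx] with t ht
      exact Real.sinc_of_ne_zero ht
    refine ContDiffAt.congr_of_eventuallyEq ?_ h
    exact Real.contDiff_sin.contDiffAt.div contDiffAt_id hx

/-- The convolution kernel. -/
def kAux (c u : ℝ) : ℝ := c / π * Real.sinc (c * u)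

theorem kAux_contDiff (c : ℝ) : ContDiff ℝ (⊤ : ℕ∞) (kAux c) := by
  unfold kAux
  exact contDiff_const.mul (sinc_contDiff_aux.comp (contDiff_const.mul contDiff_id))

theorem kernel_eq (c : ℝ) (hc : 0 < c) (x y : ℝ) : sincKernel c x y = kAux c (x - y) := by
  unfold sincKernel kAux
  split_ifs with h
  · simp [h]
  · have h' : x - y ≠ 0 := sub_ne_zero.mpr h
    rw [Real.sinc_of_ne_zero (mul_ne_zero hc.ne' h')]
    have := hc.ne'
    field_simp

theorem mul_kAux (c : ℝ) (hc : 0 < c) (u : ℝ) : u * kAux c u = Real.sin (c * u) / π := by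
  unfold kAux
  by_cases h : u = 0
  · simp [h]
  · rw [Real.sinc_of_ne_zero (mul_ne_zero hc.ne' h)]
    have := hc.ne'
    field_simp

theorem kAux_ode (c : ℝ) (hc : 0 < c) (u : ℝ) :
    2 * deriv (kAux c) u + u * deriv (deriv (kAux c)) u = - c ^ 2 * (u * kAux c u) := by
  have hk := kAux_contDiff c
  have hk1 := (contDiff_infty_iff_deriv.mp hk)
  have hk2 := (contDiff_infty_iff_deriv.mp hk1.2)
  have e1 : ∀ u, kAux c u + u * deriv (kAux c) u = c * Real.cos (c * u) / π := by
    intro u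
    have a : HasDerivAt (fun u => u * kAux c u) (1 * kAux c u + u * deriv (kAux c) u) u :=
      (hasDerivAt_id u).mul (hk1.1 u).hasDerivAt
    have b : HasDerivAt (fun u => Real.sin (c * u) / π) (Real.cos (c * u) * (c * 1) / π) u :=
      (((hasDerivAt_id u).const_mul c).sin).div_const π
    rw [funext (mul_kAux c hc)] at a
    have := a.unique b
    linear_combination this
  have a : HasDerivAt (fun u => kAux c u + u * deriv (kAux c) u)
      (deriv (kAux c) u + (1 * deriv (kAux c) u + u * deriv (deriv (kAux c)) u)) u :=
    (hk1.1 u).hasDerivAt.add ((hasDerivAt_id u).mul (hk2.1 u).hasDerivAt)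
  have b : HasDerivAt (fun u => c * Real.cos (c * u) / π)
      (c * (-Real.sin (c * u) * (c * 1)) / π) u :=
    ((((hasDerivAt_id u).const_mul c).cos).const_mul c).div_const π
  rw [funext e1] at a
  have := a.unique b
  rw [mul_kAux c hc]
  linear_combination this

theorem conv_hasDerivAt (k f : ℝ → ℝ) (hk : ContDiff ℝ (⊤ : ℕ∞) k)
    (hf : IntervalIntegrable f volume (-1) 1) (x : ℝ) :
    HasDerivAt (fun x => ∫ y in (-1:ℝ)..1, k (x - y) * f y)
      (∫ y in (-1:ℝ)..1, deriv k (x - y) * f y) x := by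
  have hk1 := (contDiff_infty_iff_deriv.mp hk)
  have hc : Continuous k := hk.continuous
  have hc1 : Continuous (deriv k) := hk1.2.continuous
  obtain ⟨M, hM⟩ := (isCompact_Icc (a := x - 2) (b := x + 2)).exists_bound_of_continuousOn
    hc1.continuousOn
  have hint : ∀ g : ℝ → ℝ, Continuous g → ∀ z : ℝ,
      IntervalIntegrable (fun y => g (z - y) * f y) volume (-1) 1 := fun g hg z =>
    hf.continuousOn_mul (by fun_prop)
  refine (intervalIntegral.hasDerivAt_integral_of_dominated_loc_of_deriv_le
    (F := fun x y => k (x - y) * f y) (F' := fun x y => deriv k (x - y) * f y)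
    (bound := fun y => M * ‖f y‖) (s := Metric.ball x 1) (Metric.ball_mem_nhds x one_pos)
    ?_ (hint k hc x) ?_ ?_ (hf.norm.const_mul M) ?_).2
  · exact Filter.Eventually.of_forall fun z => (intervalIntegrable_iff.mp (hint k hc z)).aestronglyMeasurable
  · exact (intervalIntegrable_iff.mp (hint _ hc1 x)).aestronglyMeasurable
  · refine Filter.Eventually.of_forall fun y hy z hz => ?_
    rw [norm_mul]
    refine mul_le_mul_of_nonneg_right (hM _ ?_) (norm_nonneg _)
    rw [Set.uIoc_of_le (by norm_num)] at hy
    rw [Metric.mem_ball, Real.dist_eq, abs_lt] at hz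
    constructor <;> linarith [hy.1, hy.2]
  · refine Filter.Eventually.of_forall fun y hy z hz => ?_
    exact (HasDerivAt.comp_sub_const z y (hk1.1 (z - y)).hasDerivAt).mul_const _

theorem conv_contDiff (f : ℝ → ℝ) (hf : IntervalIntegrable f volume (-1) 1) (n : ℕ) :
    ∀ k : ℝ → ℝ, ContDiff ℝ (⊤ : ℕ∞) k →
    ContDiff ℝ n (fun x => ∫ y in (-1:ℝ)..1, k (x - y) * f y) := by
  induction n with
  | zero =>
    intro k hk
    have : Differentiable ℝ (fun x => ∫ y in (-1:ℝ)..1, k (x - y) * f y) :=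
      fun x => (conv_hasDerivAt k f hk hf x).differentiableAt
    exact contDiff_zero.mpr this.continuous
  | succ n ih =>
    intro k hk
    push_cast
    rw [contDiff_succ_iff_deriv]
    refine ⟨fun x => (conv_hasDerivAt k f hk hf x).differentiableAt, by simp, ?_⟩
    rw [funext fun x => (conv_hasDerivAt k f hk hf x).deriv]
    exact ih _ (contDiff_infty_iff_deriv.mp hk).2

/-- The sinc concentration operator commutes with the prolate spheroidal
Sturm–Liouville operator: for `c > 0` and `ψ` twice continuously differentiable on
`[−1,1]`, `Qψ` is smooth and `L(Qψ)(x) = Q(Lψ)(x)` for every `x ∈ [−1,1]`.  Consequently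
`Q` and `L` share eigenfunctions. -/
theorem sinc_operator_commutes_with_sturm_liouville
    (c : ℝ) (hc : 0 < c)
    (ψ : ℝ → ℝ) (hψ : ContDiffOn ℝ 2 ψ (Set.Icc (-1) 1)) :
    ContDiff ℝ (⊤ : ℕ∞) (Qop c ψ) ∧
    ∀ x ∈ Set.Icc (-1:ℝ) 1, Lop c (Qop c ψ) x = Qop c (Lop c ψ) x := by
  have hQ : ∀ f : ℝ → ℝ, Qop c f = fun x => ∫ y in (-1:ℝ)..1, kAux c (x - y) * f y := by
    intro f
    funext x
    simp only [Qop, kernel_eq c hc]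
  have hk := kAux_contDiff c
  have hk1 := contDiff_infty_iff_deriv.mp hk
  have hk2 := contDiff_infty_iff_deriv.mp hk1.2
  have hUD : UniqueDiffOn ℝ (Set.Icc (-1:ℝ) 1) := uniqueDiffOn_Icc (by norm_num)
  have hψc : ContinuousOn ψ (Set.Icc (-1) 1) := hψ.continuousOn
  have hII : ∀ g : ℝ → ℝ, ContinuousOn g (Set.Icc (-1) 1) →
      IntervalIntegrable g volume (-1) 1 := fun g hg =>
    hg.intervalIntegrable_of_Icc (by norm_num)
  have hψi := hII ψ hψc
  refine ⟨?_, ?_⟩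
  · rw [hQ, contDiff_infty]
    exact fun n => conv_contDiff ψ hψi n _ hk
  intro x hx
  have h2 := (contDiffOn_succ_iff_derivWithin (n := 1) hUD).mp (by simpa [one_add_one_eq_two] using hψ)
  have h1 := (contDiffOn_succ_iff_derivWithin (n := 0) hUD).mp (by simpa using h2.2.2)
  have hd1 := h2.1
  have hd2 := h1.1
  have hc2 : ContinuousOn _ _ := h1.2.2.continuousOn
  have hc1 : ContinuousOn _ _ := hd2.continuousOn
  set ψ1 := derivWithin ψ (Set.Icc (-1) 1) with hψ1
  set ψ2 := derivWithin ψ1 (Set.Icc (-1) 1) with hψ2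
  have hp : ∀ y : ℝ, HasDerivAt (fun t : ℝ => 1 - t ^ 2) (-(2 * y)) y := by
    intro y
    simpa using ((hasDerivAt_id y).pow 2).const_sub 1
  have hL : ∀ y ∈ Set.Icc (-1:ℝ) 1, Lop c ψ y
      = -(2 * y) * ψ1 y + (1 - y ^ 2) * ψ2 y - c ^ 2 * y ^ 2 * ψ y := by
    intro y hy
    have := (hp y).hasDerivWithinAt.mul (hd2 y hy).hasDerivWithinAt
    unfold Lop
    congr 1
    exact this.derivWithin (hUD y hy)
  -- left side
  have hF1 : ∀ t, HasDerivAt (Qop c ψ) (∫ y in (-1:ℝ)..1, deriv (kAux c) (t - y) * ψ y) t := by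
    intro t
    rw [hQ]
    exact conv_hasDerivAt _ ψ hk hψi t
  have hLQ : Lop c (Qop c ψ) x
      = -(2 * x) * (∫ y in (-1:ℝ)..1, deriv (kAux c) (x - y) * ψ y)
        + (1 - x ^ 2) * (∫ y in (-1:ℝ)..1, deriv (deriv (kAux c)) (x - y) * ψ y)
        - c ^ 2 * x ^ 2 * (∫ y in (-1:ℝ)..1, kAux c (x - y) * ψ y) := by
    have e := (hp x).mul (conv_hasDerivAt _ ψ hk1.2 hψi x)
    have e' : HasDerivWithinAt
        (fun t => (1 - t ^ 2) * derivWithin (Qop c ψ) (Set.Icc (-1) 1) t) _ (Set.Icc (-1) 1) x :=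
      e.hasDerivWithinAt.congr_of_mem (fun t ht => by
        simp only [Pi.mul_apply]
        rw [(hF1 t).hasDerivWithinAt.derivWithin (hUD t ht)]) hx
    unfold Lop
    rw [e'.derivWithin (hUD x hx), hQ]
  have hkc : Continuous (kAux c) := hk.continuous
  have hkc1 : Continuous (deriv (kAux c)) := hk1.2.continuous
  have hkc2 : Continuous (deriv (deriv (kAux c))) := hk2.2.continuous
  -- right side
  have hRQ : Qop c (Lop c ψ) x = ∫ y in (-1:ℝ)..1, kAux c (x - y) *
      (-(2 * y) * ψ1 y + (1 - y ^ 2) * ψ2 y - c ^ 2 * y ^ 2 * ψ y) := by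
    rw [hQ]
    refine intervalIntegral.integral_congr fun y hy => ?_
    rw [Set.uIcc_of_le (by norm_num)] at hy
    simp only [hL y hy]
  have hFTC := intervalIntegral.integral_eq_sub_of_hasDerivAt_of_le (a := -1) (b := 1)
    (f := fun y => (1 - y ^ 2) * (kAux c (x - y) * ψ1 y + deriv (kAux c) (x - y) * ψ y))
    (f' := fun y => kAux c (x - y) * (-(2 * y) * ψ1 y + (1 - y ^ 2) * ψ2 y)
      - (deriv (deriv (kAux c)) (x - y) * (1 - y ^ 2) + 2 * y * deriv (kAux c) (x - y)) * ψ y)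
    (by norm_num) (by fun_prop) (by
      intro y hy
      have hyI : y ∈ Set.Icc (-1:ℝ) 1 := Set.Ioo_subset_Icc_self hy
      have hn : Set.Icc (-1:ℝ) 1 ∈ nhds y := Icc_mem_nhds hy.1 hy.2
      have a1 : HasDerivAt ψ (ψ1 y) y := (hd1 y hyI).hasDerivWithinAt.hasDerivAt hn
      have a2 : HasDerivAt ψ1 (ψ2 y) y := (hd2 y hyI).hasDerivWithinAt.hasDerivAt hn
      have b1 := HasDerivAt.comp_const_sub x y (hk1.1 (x - y)).hasDerivAt
      have b2 := HasDerivAt.comp_const_sub x y (hk2.1 (x - y)).hasDerivAt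
      refine ((hp y).mul ((b1.mul a2).add (b2.mul a1))).congr_deriv ?_
      simp only [Pi.add_apply, Pi.mul_apply]
      ring) (hII _ (by fun_prop))
  have hI := fun (g : ℝ → ℝ) (hg : ContinuousOn g (Set.Icc (-1) 1)) => hII g hg
  rw [hLQ, hRQ, ← intervalIntegral.integral_const_mul, ← intervalIntegral.integral_const_mul,
    ← intervalIntegral.integral_const_mul,
    ← intervalIntegral.integral_add (hII _ (by fun_prop)) (hII _ (by fun_prop)),
    ← intervalIntegral.integral_sub (hII _ (by fun_prop)) (hII _ (by fun_prop)),
    ← sub_eq_zero, ← neg_eq_zero, neg_sub,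
    ← intervalIntegral.integral_sub (hII _ (by fun_prop)) (hII _ (by fun_prop))]
  norm_num at hFTC
  rw [← hFTC]
  refine intervalIntegral.integral_congr fun y _ => ?_
  have := kAux_ode c hc (x - y)
  linear_combination (x + y) * ψ y * this
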